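/- arXiv:math/0412429 — 5 statements merged into one kernel-verified Lean document; each statement's English description precedes it below -/
import Mathlib

section
/- Let γ ∈ (0,1), w ≥ 0, w₊ ≥ 0, and let η and η₊ be independent integrable real random variables with E[η] = E[η₊] = 0. Set w' = (1-γ)w + γw₊ + ηw and w₊' = (1-γ)w₊ + γw + η₊w₊. Then the expected total wealth gain when only trades leaving both wealths nonnegative are performed is nonnegative: E[(w' + w₊' - w - w₊) · Ψ(w' ≥ 0)Ψ(w₊' ≥ 0)] ≥ 0, where Ψ(A) denotes the indicator of the event A. (Thus the no-debt rule makes the total wealth increasing in mean.) -/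
open MeasureTheory

/-!
Writing `X = η w` and `Y = η₊ w₊`, the total wealth gain is `X + Y`, and the trade is admissible
when `X` and `Y` are at least `-((1 - γ) w + γ w₊)` and `-((1 - γ) w₊ + γ w)`. Since these
thresholds are nonpositive, refusing a trade on account of `X` discards only negative values of `X`,
so truncation cannot lower the mean of `X`; likewise for `Y`. By independence, the refusals caused
by the partner merely rescale the truncated mean of each variable by a probability.
-/

section

open ProbabilityTheory

variable {Ω : Type*} [MeasurableSpace Ω] {P : Measure Ω}

lemma integral_le_setIntegral_of_nonpos_compl {E : Type*} [NormedAddCommGroup E]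
    [NormedSpace ℝ E] [PartialOrder E] [IsOrderedAddMonoid E] [IsOrderedModule ℝ E]
    [ClosedIciTopology E] {f : Ω → E} {s : Set Ω}
    (hs : NullMeasurableSet s P) (hf : Integrable f P) (hfs : ∀ ω ∉ s, f ω ≤ 0) :
    ∫ ω, f ω ∂P ≤ ∫ ω in s, f ω ∂P :=
  calc ∫ ω, f ω ∂P ≤ ∫ ω, s.indicator f ω ∂P :=
        integral_mono hf (hf.indicator₀ hs) (Set.le_indicator (fun _ _ ↦ le_rfl) hfs)
    _ = ∫ ω in s, f ω ∂P := integral_indicator₀ hs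

lemma setIntegral_preimage_inter_preimage_of_indepFun {𝓧 𝓨 E : Type*} [MeasurableSpace 𝓧]
    [MeasurableSpace 𝓨] [NormedAddCommGroup E] [NormedSpace ℝ E] {X : Ω → 𝓧} {Y : Ω → 𝓨}
    {f : 𝓨 → E} {A : Set 𝓧} {B : Set 𝓨} (hXY : IndepFun X Y P)
    (hX : AEMeasurable X P) (hY : AEMeasurable Y P) (hf : AEStronglyMeasurable f (P.map Y))
    (hA : MeasurableSet A) (hB : MeasurableSet B) :
    ∫ ω in X ⁻¹' A ∩ Y ⁻¹' B, f (Y ω) ∂P = P.real (X ⁻¹' A) • ∫ ω in Y ⁻¹' B, f (Y ω) ∂P := by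
  have hXA : NullMeasurableSet (X ⁻¹' A) P := hX.nullMeasurableSet_preimage hA
  have hYB : NullMeasurableSet (Y ⁻¹' B) P := hY.nullMeasurableSet_preimage hB
  calc ∫ ω in X ⁻¹' A ∩ Y ⁻¹' B, f (Y ω) ∂P
      = ∫ ω, A.indicator (1 : 𝓧 → ℝ) (X ω) • B.indicator f (Y ω) ∂P := by
        rw [← integral_indicator₀ (hXA.inter hYB)]
        congr with ω
        by_cases hωA : X ω ∈ A <;> by_cases hωB : Y ω ∈ B <;> simp [hωA, hωB]
    _ = (∫ ω, A.indicator (1 : 𝓧 → ℝ) (X ω) ∂P) • ∫ ω, B.indicator f (Y ω) ∂P :=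
        hXY.integral_fun_comp_smul_comp hX hY
          (aestronglyMeasurable_one.indicator hA) (hf.indicator hB)
    _ = P.real (X ⁻¹' A) • ∫ ω in Y ⁻¹' B, f (Y ω) ∂P := by
        congr 1
        · exact (integral_indicator₀ hXA).trans (by simp)
        · exact integral_indicator₀ hYB

lemma setIntegral_preimage_inter_preimage_nonneg_of_indepFun {𝓧 : Type*} [MeasurableSpace 𝓧]
    {X : Ω → 𝓧} {Y : Ω → ℝ} {A : Set 𝓧} {B : Set ℝ} (hXY : IndepFun X Y P)
    (hX : AEMeasurable X P) (hY : Integrable Y P) (hEY : 0 ≤ ∫ ω, Y ω ∂P)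
    (hA : MeasurableSet A) (hB : MeasurableSet B) (hposB : Set.Ioi 0 ⊆ B) :
    0 ≤ ∫ ω in X ⁻¹' A ∩ Y ⁻¹' B, Y ω ∂P := by
  have htrunc : ∫ ω, Y ω ∂P ≤ ∫ ω in Y ⁻¹' B, Y ω ∂P :=
    integral_le_setIntegral_of_nonpos_compl (hY.aemeasurable.nullMeasurableSet_preimage hB) hY
      fun _ hω ↦ not_lt.1 fun hpos ↦ hω (hposB hpos)
  calc 0 ≤ P.real (X ⁻¹' A) • ∫ ω in Y ⁻¹' B, Y ω ∂P :=
        smul_nonneg measureReal_nonneg (hEY.trans htrunc)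
    _ = ∫ ω in X ⁻¹' A ∩ Y ⁻¹' B, Y ω ∂P :=
        (setIntegral_preimage_inter_preimage_of_indepFun hXY hX hY.aemeasurable
          aestronglyMeasurable_id hA hB).symm

lemma setIntegral_preimage_inter_preimage_add_nonneg_of_indepFun {X Y : Ω → ℝ} {A B : Set ℝ}
    (hXY : IndepFun X Y P) (hX : Integrable X P) (hY : Integrable Y P)
    (hEX : 0 ≤ ∫ ω, X ω ∂P) (hEY : 0 ≤ ∫ ω, Y ω ∂P) (hA : MeasurableSet A)
    (hB : MeasurableSet B) (hposA : Set.Ioi 0 ⊆ A) (hposB : Set.Ioi 0 ⊆ B) :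
    0 ≤ ∫ ω in X ⁻¹' A ∩ Y ⁻¹' B, (X ω + Y ω) ∂P := by
  rw [integral_add hX.integrableOn hY.integrableOn]
  refine add_nonneg ?_ ?_
  · rw [Set.inter_comm]
    exact setIntegral_preimage_inter_preimage_nonneg_of_indepFun hXY.symm hY.aemeasurable hX hEX
      hB hA hposA
  · exact setIntegral_preimage_inter_preimage_nonneg_of_indepFun hXY hX.aemeasurable hY hEY
      hA hB hposB

lemma integral_add_mul_ite_nonneg_of_indepFun {X Y : Ω → ℝ} {a b : ℝ} (ha : 0 ≤ a) (hb : 0 ≤ b)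
    (hXY : IndepFun X Y P) (hX : Integrable X P) (hY : Integrable Y P)
    (hEX : 0 ≤ ∫ ω, X ω ∂P) (hEY : 0 ≤ ∫ ω, Y ω ∂P) :
    0 ≤ ∫ ω, (X ω + Y ω) *
      ((if 0 ≤ a + X ω then (1 : ℝ) else 0) * (if 0 ≤ b + Y ω then (1 : ℝ) else 0)) ∂P := by
  have hmeas (c : ℝ) : MeasurableSet {x : ℝ | 0 ≤ c + x} :=
    measurableSet_le measurable_const (by fun_prop)
  have hpos {c : ℝ} (hc : 0 ≤ c) : Set.Ioi 0 ⊆ {x : ℝ | 0 ≤ c + x} :=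
    fun _ hx ↦ add_nonneg hc (le_of_lt hx)
  calc 0 ≤ ∫ ω in X ⁻¹' {x | 0 ≤ a + x} ∩ Y ⁻¹' {y | 0 ≤ b + y}, (X ω + Y ω) ∂P :=
        setIntegral_preimage_inter_preimage_add_nonneg_of_indepFun hXY hX hY hEX hEY
          (hmeas a) (hmeas b) (hpos ha) (hpos hb)
    _ = _ := by
        rw [← integral_indicator₀ ((hX.aemeasurable.nullMeasurableSet_preimage (hmeas a)).inter
          (hY.aemeasurable.nullMeasurableSet_preimage (hmeas b)))]
        congr with ω
        by_cases hωa : 0 ≤ a + X ω <;> by_cases hωb : 0 ≤ b + Y ω <;> simp [hωa, hωb]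

end

theorem expected_admissible_wealth_gain_nonneg_general {Ω : Type*} [MeasurableSpace Ω]
    (P : Measure Ω) (γ w ws : ℝ) (hγ : γ ∈ Set.Icc (0 : ℝ) 1) (hw : 0 ≤ w) (hws : 0 ≤ ws)
    (η ηs : Ω → ℝ) (hind : ProbabilityTheory.IndepFun η ηs P)
    (hη : Integrable η P) (hηs : Integrable ηs P)
    (hEη : 0 ≤ ∫ ω, η ω ∂P) (hEηs : 0 ≤ ∫ ω, ηs ω ∂P) :
    0 ≤ ∫ ω, ((((1 - γ) * w + γ * ws + η ω * w) + ((1 - γ) * ws + γ * w + ηs ω * ws)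
          - w - ws) *
        ((if 0 ≤ (1 - γ) * w + γ * ws + η ω * w then (1:ℝ) else 0) *
         (if 0 ≤ (1 - γ) * ws + γ * w + ηs ω * ws then (1:ℝ) else 0))) ∂P := by
  have hlevel {u v : ℝ} (hu : 0 ≤ u) (hv : 0 ≤ v) : 0 ≤ (1 - γ) * u + γ * v :=
    add_nonneg (mul_nonneg (sub_nonneg.2 hγ.2) hu) (mul_nonneg hγ.1 hv)
  have hmean {X : Ω → ℝ} {u : ℝ} (hX : 0 ≤ ∫ ω, X ω ∂P) (hu : 0 ≤ u) : 0 ≤ ∫ ω, X ω * u ∂P :=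
    (mul_nonneg hX hu).trans_eq (integral_mul_const u X).symm
  have hindep : ProbabilityTheory.IndepFun (fun ω ↦ η ω * w) (fun ω ↦ ηs ω * ws) P :=
    hind.comp (measurable_id.mul_const w) (measurable_id.mul_const ws)
  have hgain (ω : Ω) : ((1 - γ) * w + γ * ws + η ω * w) + ((1 - γ) * ws + γ * w + ηs ω * ws)
      - w - ws = η ω * w + ηs ω * ws := by ring
  simp only [hgain]
  exact integral_add_mul_ite_nonneg_of_indepFun (hlevel hw hws) (hlevel hws hw) hindep
    (hη.mul_const w) (hηs.mul_const ws) (hmean hEη hw) (hmean hEηs hws)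

/-- The no-debt rule makes the total wealth increasing in mean: the expected total
wealth gain restricted to admissible trades is nonnegative,
`E[(w' + w₊' - w - w₊) · Ψ(w' ≥ 0)Ψ(w₊' ≥ 0)] ≥ 0`. -/
theorem expected_admissible_wealth_gain_nonneg {Ω : Type*} [MeasurableSpace Ω]
    (P : Measure Ω) [IsProbabilityMeasure P]
    (γ w ws : ℝ) (hγ : γ ∈ Set.Ioo (0:ℝ) 1) (hw : 0 ≤ w) (hws : 0 ≤ ws)
    (η ηs : Ω → ℝ) (hmη : Measurable η) (hmηs : Measurable ηs)
    (hind : ProbabilityTheory.IndepFun η ηs P)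
    (hη : Integrable η P) (hηs : Integrable ηs P)
    (hEη : ∫ ω, η ω ∂P = 0) (hEηs : ∫ ω, ηs ω ∂P = 0) :
    0 ≤ ∫ ω, ((((1 - γ) * w + γ * ws + η ω * w) + ((1 - γ) * ws + γ * w + ηs ω * ws)
          - w - ws) *
        ((if 0 ≤ (1 - γ) * w + γ * ws + η ω * w then (1:ℝ) else 0) *
         (if 0 ≤ (1 - γ) * ws + γ * w + ηs ω * ws then (1:ℝ) else 0))) ∂P :=
  expected_admissible_wealth_gain_nonneg_general P γ w ws (Set.Ioo_subset_Icc_self hγ) hw hws η ηs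
    hind hη hηs hEη.ge hEηs.ge
end

section
/- Let γ ∈ (0,1), α > 0, and let Y be a real random variable with E[Y] = 0, E[Y²] = 1 and E[|Y|^{2+α}] < ∞. Let σ > 0 and let η = σY₁ and η₊ = σY₂ where Y₁, Y₂ are independent copies of Y. For w ≥ 0, w₊ ≥ 0 set w' = (1-γ)w + γw₊ + ηw and w₊' = (1-γ)w₊ + γw + η₊w₊. Then the expected total wealth gain of an admissible trade satisfies the upper bound E[(w' + w₊' - w - w₊) · Ψ(w' ≥ 0)Ψ(w₊' ≥ 0)] ≤ σ^{2+α} E[|Y|^{2+α}] · (2-γ)/(1-γ)^{2+α} · (w + w₊), where Ψ(A) denotes the indicator of the event A. -/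
open MeasureTheory

/-!
The total gain is `w η + w₊ η₊`, so each noise can be treated separately. If the indicator of
`w' ≥ 0` were absent, independence would factor the expectation of `η Ψ(w₊' ≥ 0)`, and the mean of
`η` would make it nonpositive. Restoring that indicator only discards the event `w' < 0`. There
`η < -(1 - γ)`, so the discarded loss `|η|` is at most `|η| (|η| / (1 - γ)) ^ (p - 1)`, whose
expectation is a `p`-th moment.
-/

open ProbabilityTheory

/-- The wealth `w' = (1 - γ) w + γ b + η w` of an agent of wealth `w` after trading with an agent of
wealth `b`, where `η` is the realised noise of the first agent (in the paper, `σ Y`). -/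
def postTradeWealth (γ w b η : ℝ) : ℝ := (1 - γ) * w + γ * b + η * w

/-- The real-valued indicator `Ψ(w' ≥ 0)`. Only one agent is tested: a trade is admissible when the
product of the two agents' indicators is `1`. -/
noncomputable def solvencyIndicator (γ w b η : ℝ) : ℝ :=
  if 0 ≤ postTradeWealth γ w b η then 1 else 0

section Pointwise

variable {γ w b η p : ℝ}

lemma solvencyIndicator_nonneg : 0 ≤ solvencyIndicator γ w b η := by
  unfold solvencyIndicator
  split_ifs <;> norm_num

lemma solvencyIndicator_le_one : solvencyIndicator γ w b η ≤ 1 := by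
  unfold solvencyIndicator
  split_ifs <;> norm_num

lemma measurable_solvencyIndicator (γ w b : ℝ) : Measurable (solvencyIndicator γ w b) :=
  .ite (measurableSet_le measurable_const (by unfold postTradeWealth; fun_prop))
    measurable_const measurable_const

lemma lt_neg_one_sub_of_postTradeWealth_neg (hγ : 0 ≤ γ) (hw : 0 ≤ w) (hb : 0 ≤ b)
    (h : postTradeWealth γ w b η < 0) : η < -(1 - γ) := by
  have hprod : (1 - γ + η) * w < 0 := by
    unfold postTradeWealth at h
    linarith [mul_nonneg hγ hb]
  linarith [neg_of_mul_neg_left hprod hw]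

lemma le_rpow_div_rpow_sub_one {c x : ℝ} (hc : 0 < c) (hcx : c ≤ x) (hp : 1 ≤ p) :
    x ≤ x ^ p / c ^ (p - 1) := by
  have hx : 0 < x := hc.trans_le hcx
  rw [le_div_iff₀ (Real.rpow_pos_of_pos hc _)]
  calc
    x * c ^ (p - 1) ≤ x * x ^ (p - 1) := by gcongr
    _ = x ^ p := by rw [← Real.rpow_one_add' hx.le (by linarith), add_sub_cancel]

lemma mul_solvencyIndicator_le (hγ : γ ∈ Set.Ico 0 1) (hw : 0 ≤ w) (hb : 0 ≤ b) (hp : 1 ≤ p) :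
    η * solvencyIndicator γ w b η ≤ η + |η| ^ p / (1 - γ) ^ (p - 1) := by
  have hγ' : 0 < 1 - γ := sub_pos.2 hγ.2
  have hmoment : 0 ≤ |η| ^ p / (1 - γ) ^ (p - 1) := by positivity
  unfold solvencyIndicator
  split_ifs with hsolvent
  · linarith
  · have hη : η < -(1 - γ) :=
      lt_neg_one_sub_of_postTradeWealth_neg hγ.1 hw hb (not_le.1 hsolvent)
    have habs : 1 - γ ≤ |η| := by linarith [neg_le_abs η]
    linarith [le_rpow_div_rpow_sub_one hγ' habs hp, neg_le_abs η]

end Pointwise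

section Expectation

variable {Ω : Type*} [MeasurableSpace Ω] {P : Measure Ω} {γ w b p : ℝ}

lemma memLp_ofReal_iff_integrable_abs_rpow {X : Ω → ℝ} (hX : AEStronglyMeasurable X P)
    (hp : 0 < p) : MemLp X (ENNReal.ofReal p) P ↔ Integrable (fun ω => |X ω| ^ p) P := by
  simpa [ENNReal.toReal_ofReal hp.le] using
    (integrable_norm_rpow_iff hX (ENNReal.ofReal_pos.2 hp).ne' ENNReal.ofReal_ne_top).symm

lemma integrable_mul_of_mem_Icc {X J : Ω → ℝ} (hX : Integrable X P)
    (hJ : AEStronglyMeasurable J P) (hJ01 : ∀ ω, J ω ∈ Set.Icc 0 1) :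
    Integrable (fun ω => X ω * J ω) P :=
  hX.mul_bdd (c := 1) hJ <| .of_forall fun ω => by
    rw [Real.norm_of_nonneg (hJ01 ω).1]
    exact (hJ01 ω).2

lemma integral_mul_nonpos_of_indepFun {X J : Ω → ℝ} (hX : AEStronglyMeasurable X P)
    (hJ : AEStronglyMeasurable J P) (hind : IndepFun X J P) (hmean : ∫ ω, X ω ∂P ≤ 0)
    (hJ0 : ∀ ω, 0 ≤ J ω) : ∫ ω, X ω * J ω ∂P ≤ 0 := by
  rw [hind.integral_fun_mul_eq_mul_integral hX hJ]
  exact mul_nonpos_of_nonpos_of_nonneg hmean (integral_nonneg hJ0)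

lemma aestronglyMeasurable_solvencyIndicator {η : Ω → ℝ} (hη : AEStronglyMeasurable η P) :
    AEStronglyMeasurable (fun ω => solvencyIndicator γ w b (η ω)) P :=
  ((measurable_solvencyIndicator γ w b).comp_aemeasurable hη.aemeasurable).aestronglyMeasurable

lemma integrable_mul_solvencyIndicator_mul {η J : Ω → ℝ} (hη : Integrable η P)
    (hJ : AEStronglyMeasurable J P) (hJ01 : ∀ ω, J ω ∈ Set.Icc 0 1) :
    Integrable (fun ω => η ω * (solvencyIndicator γ w b (η ω) * J ω)) P :=
  integrable_mul_of_mem_Icc hη (.mul (aestronglyMeasurable_solvencyIndicator hη.1) hJ) fun ω =>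
    ⟨mul_nonneg solvencyIndicator_nonneg (hJ01 ω).1,
      mul_le_one₀ solvencyIndicator_le_one (hJ01 ω).1 (hJ01 ω).2⟩

lemma integral_mul_solvencyIndicator_mul_le [IsProbabilityMeasure P] {η J : Ω → ℝ}
    (hγ : γ ∈ Set.Ico 0 1) (hw : 0 ≤ w) (hb : 0 ≤ b) (hp : 1 ≤ p)
    (hη : MemLp η (ENNReal.ofReal p) P) (hmean : ∫ ω, η ω ∂P ≤ 0)
    (hJ : AEStronglyMeasurable J P) (hJ01 : ∀ ω, J ω ∈ Set.Icc 0 1) (hind : IndepFun η J P) :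
    ∫ ω, η ω * (solvencyIndicator γ w b (η ω) * J ω) ∂P ≤
      (∫ ω, |η ω| ^ p ∂P) / (1 - γ) ^ (p - 1) := by
  have hηint : Integrable η P := hη.integrable (ENNReal.one_le_ofReal.2 hp)
  have hηJ : Integrable (fun ω => η ω * J ω) P := integrable_mul_of_mem_Icc hηint hJ hJ01
  have hmoment : Integrable (fun ω => |η ω| ^ p / (1 - γ) ^ (p - 1)) P :=
    ((memLp_ofReal_iff_integrable_abs_rpow hη.1 (by linarith)).1 hη).div_const _
  have hpointwise (ω : Ω) : η ω * (solvencyIndicator γ w b (η ω) * J ω) ≤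
      η ω * J ω + |η ω| ^ p / (1 - γ) ^ (p - 1) := by
    have hγ' : 0 < 1 - γ := sub_pos.2 hγ.2
    calc
      _ = η ω * solvencyIndicator γ w b (η ω) * J ω := by ring
      _ ≤ (η ω + |η ω| ^ p / (1 - γ) ^ (p - 1)) * J ω :=
        mul_le_mul_of_nonneg_right (mul_solvencyIndicator_le hγ hw hb hp) (hJ01 ω).1
      _ = η ω * J ω + |η ω| ^ p / (1 - γ) ^ (p - 1) * J ω := by ring
      _ ≤ η ω * J ω + |η ω| ^ p / (1 - γ) ^ (p - 1) := by
        gcongr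
        exact mul_le_of_le_one_right (by positivity) (hJ01 ω).2
  calc
    _ ≤ ∫ ω, (η ω * J ω + |η ω| ^ p / (1 - γ) ^ (p - 1)) ∂P :=
      integral_mono (integrable_mul_solvencyIndicator_mul hηint hJ hJ01) (hηJ.add hmoment)
        hpointwise
    _ = ∫ ω, η ω * J ω ∂P + (∫ ω, |η ω| ^ p ∂P) / (1 - γ) ^ (p - 1) := by
      rw [integral_add hηJ hmoment, integral_div]
    _ ≤ (∫ ω, |η ω| ^ p ∂P) / (1 - γ) ^ (p - 1) :=
      add_le_of_nonpos_left
        (integral_mul_nonpos_of_indepFun hη.1 hJ hind hmean fun ω => (hJ01 ω).1)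

theorem expected_wealth_gain_upper_bound_general [IsProbabilityMeasure P] {η θ : Ω → ℝ}
    (hγ : γ ∈ Set.Ico 0 1) (hw : 0 ≤ w) (hb : 0 ≤ b) (hp : 1 ≤ p)
    (hη : MemLp η (ENNReal.ofReal p) P) (hθ : MemLp θ (ENNReal.ofReal p) P)
    (hηmean : ∫ ω, η ω ∂P ≤ 0) (hθmean : ∫ ω, θ ω ∂P ≤ 0) (hind : IndepFun η θ P) :
    ∫ ω, (postTradeWealth γ w b (η ω) + postTradeWealth γ b w (θ ω) - w - b) *
        (solvencyIndicator γ w b (η ω) * solvencyIndicator γ b w (θ ω)) ∂P ≤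
      (w * ∫ ω, |η ω| ^ p ∂P + b * ∫ ω, |θ ω| ^ p ∂P) / (1 - γ) ^ (p - 1) := by
  set ψ : Ω → ℝ := fun ω => solvencyIndicator γ w b (η ω)
  set φ : Ω → ℝ := fun ω => solvencyIndicator γ b w (θ ω)
  have hψ01 (ω : Ω) : ψ ω ∈ Set.Icc 0 1 := ⟨solvencyIndicator_nonneg, solvencyIndicator_le_one⟩
  have hφ01 (ω : Ω) : φ ω ∈ Set.Icc 0 1 := ⟨solvencyIndicator_nonneg, solvencyIndicator_le_one⟩
  have hψ : AEStronglyMeasurable ψ P := aestronglyMeasurable_solvencyIndicator hη.1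
  have hφ : AEStronglyMeasurable φ P := aestronglyMeasurable_solvencyIndicator hθ.1
  have hηφ : IndepFun η φ P := hind.comp measurable_id (measurable_solvencyIndicator γ b w)
  have hθψ : IndepFun θ ψ P := hind.symm.comp measurable_id (measurable_solvencyIndicator γ w b)
  have hηint : Integrable (fun ω => η ω * (ψ ω * φ ω)) P :=
    integrable_mul_solvencyIndicator_mul (hη.integrable (ENNReal.one_le_ofReal.2 hp)) hφ hφ01
  have hθint : Integrable (fun ω => θ ω * (φ ω * ψ ω)) P :=
    integrable_mul_solvencyIndicator_mul (hθ.integrable (ENNReal.one_le_ofReal.2 hp)) hψ hψ01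
  calc
    _ = ∫ ω, (w * (η ω * (ψ ω * φ ω)) + b * (θ ω * (φ ω * ψ ω))) ∂P := by
      congr with ω
      unfold postTradeWealth
      ring
    _ = w * ∫ ω, η ω * (ψ ω * φ ω) ∂P + b * ∫ ω, θ ω * (φ ω * ψ ω) ∂P := by
      rw [integral_add (hηint.const_mul w) (hθint.const_mul b), integral_const_mul,
        integral_const_mul]
    _ ≤ w * ((∫ ω, |η ω| ^ p ∂P) / (1 - γ) ^ (p - 1)) +
          b * ((∫ ω, |θ ω| ^ p ∂P) / (1 - γ) ^ (p - 1)) := by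
      gcongr
      · exact integral_mul_solvencyIndicator_mul_le hγ hw hb hp hη hηmean hφ hφ01 hηφ
      · exact integral_mul_solvencyIndicator_mul_le hγ hb hw hp hθ hθmean hψ hψ01 hθψ
    _ = _ := by ring

lemma integral_abs_const_mul_rpow {σ : ℝ} (hσ : 0 ≤ σ) (X : Ω → ℝ) :
    ∫ ω, |σ * X ω| ^ p ∂P = σ ^ p * ∫ ω, |X ω| ^ p ∂P := by
  simp_rw [abs_mul, abs_of_nonneg hσ, Real.mul_rpow hσ (abs_nonneg _), integral_const_mul]

lemma scaled_moment_bound_le_of_identDistrib {X Y : Ω → ℝ} {σ : ℝ} (hXY : IdentDistrib X Y P P)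
    (hγ : γ < 1) (hσ : 0 ≤ σ) (hw : 0 ≤ w) (hb : 0 ≤ b) :
    (w * ∫ ω, |σ * X ω| ^ p ∂P + b * ∫ ω, |σ * Y ω| ^ p ∂P) / (1 - γ) ^ (p - 1) ≤
      σ ^ p * (∫ ω, |X ω| ^ p ∂P) * (2 - γ) / (1 - γ) ^ p * (w + b) := by
  have hγ' : 0 < 1 - γ := sub_pos.2 hγ
  have hXYp : ∫ ω, |X ω| ^ p ∂P = ∫ ω, |Y ω| ^ p ∂P :=
    (hXY.comp (u := fun x => |x| ^ p) (by fun_prop)).integral_eq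
  calc
    _ = σ ^ p * (∫ ω, |X ω| ^ p ∂P) * (1 - γ) / (1 - γ) ^ p * (w + b) := by
      rw [integral_abs_const_mul_rpow hσ, integral_abs_const_mul_rpow hσ, ← hXYp,
        Real.rpow_sub_one hγ'.ne']
      field_simp
    _ ≤ _ := by
      gcongr
      norm_num

end Expectation

/-- Upper bound for the expected total wealth gain of an admissible trade:
`E[(w' + w₊' - w - w₊) Ψ(w' ≥ 0)Ψ(w₊' ≥ 0)]
  ≤ σ^{2+α} E[|Y|^{2+α}] (2-γ)/(1-γ)^{2+α} (w + w₊)`,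
where `η = σY₁`, `η₊ = σY₂` and `Y₁, Y₂` are independent copies of a centered
unit-variance random variable `Y` with finite `(2+α)`-moment. -/
theorem expected_wealth_gain_upper_bound {Ω : Type*} [MeasurableSpace Ω]
    (P : Measure Ω) [IsProbabilityMeasure P]
    (γ α σ w ws : ℝ) (hγ : γ ∈ Set.Ioo (0:ℝ) 1) (hα : 0 < α) (hσ : 0 < σ)
    (hw : 0 ≤ w) (hws : 0 ≤ ws)
    (Y₁ Y₂ : Ω → ℝ) (hm1 : Measurable Y₁) (hm2 : Measurable Y₂)
    (hind : ProbabilityTheory.IndepFun Y₁ Y₂ P)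
    (hid : Measure.map Y₁ P = Measure.map Y₂ P)
    (hE : ∫ ω, Y₁ ω ∂P = 0) (hV : ∫ ω, Y₁ ω ^ 2 ∂P = 1)
    (hint1 : Integrable Y₁ P) (hint2 : Integrable (fun ω => Y₁ ω ^ 2) P)
    (hmom : Integrable (fun ω => |Y₁ ω| ^ (2 + α)) P) :
    ∫ ω, ((((1 - γ) * w + γ * ws + σ * Y₁ ω * w)
            + ((1 - γ) * ws + γ * w + σ * Y₂ ω * ws) - w - ws) *
        ((if 0 ≤ (1 - γ) * w + γ * ws + σ * Y₁ ω * w then (1:ℝ) else 0) *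
         (if 0 ≤ (1 - γ) * ws + γ * w + σ * Y₂ ω * ws then (1:ℝ) else 0))) ∂P
      ≤ σ ^ (2 + α) * (∫ ω, |Y₁ ω| ^ (2 + α) ∂P) * (2 - γ) / (1 - γ) ^ (2 + α)
          * (w + ws) := by
  have hY : IdentDistrib Y₁ Y₂ P P := ⟨hm1.aemeasurable, hm2.aemeasurable, hid⟩
  have hLp : MemLp Y₁ (ENNReal.ofReal (2 + α)) P :=
    (memLp_ofReal_iff_integrable_abs_rpow hm1.aestronglyMeasurable (by linarith)).2 hmom
  exact (expected_wealth_gain_upper_bound_general ⟨hγ.1.le, hγ.2⟩ hw hws (by linarith)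
    (hLp.const_mul σ) ((hY.memLp_iff.1 hLp).const_mul σ) (by simp [integral_const_mul, hE])
    (by simp [integral_const_mul, ← hY.integral_eq, hE])
    (hind.comp (measurable_const_mul σ) (measurable_const_mul σ))).trans
      (scaled_moment_bound_le_of_identDistrib hY hγ.2 hσ.le hw hws)
end

section
/- Let δ ∈ (0,1], λ > 0, w ≥ 0, w₊ ≥ 0, and let Y be a real random variable with E[Y] = 0, E[Y²] = 1 and E[|Y|^{2+δ}] < ∞. Let φ : ℝ → ℝ be twice differentiable with φ'' Hölder continuous of order δ. For γ ∈ (0,1) define the random post-trade wealth w'_γ = w + γ(w₊ - w) + √(λγ) Y w. Then lim_{γ → 0⁺} (1/γ) E[ φ(w'_γ) - φ(w) ] = (w₊ - w) φ'(w) + (λ/2) w² φ''(w). (This is the pointwise continuous trading limit producing the drift and diffusion terms of the Fokker-Planck equation ∂g/∂τ = (λ/2) ∂²(w²g)/∂w² + ∂((w-m)g)/∂w.) -/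
open MeasureTheory

/-!
Write `a = ws - w`, `Z = √l * w * Y`, `b = φ' w`, `c = φ'' w`, and `ε = √γ`, so that the increment
of wealth is `ε * (ε * a + Z)`. As `Z` is centred, the linear term of the Taylor expansion of `φ`
at `w` contributes `b * ε * E[ε * a + Z] = ε² * a * b`. The rest of the increment of `φ` is
`f (ε * (ε * a + Z))` for a function `f` with `f h = c / 2 * h² + o(h²)`, so its quotient by `ε²`
tends to `c / 2 * Z²` pointwise. If `φ` grows at most like `|x| ^ p` with `2 ≤ p`, then `f h` is
bounded for all `h` by a multiple of `h² * (1 + |h|) ^ (p - 2)`; hence the quotients are dominated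
by a multiple of `(1 + |a| + |Z|) ^ p`, and dominated convergence applies as soon as `Y` has a
moment of order `p`. Hölder continuity of `φ''` of order `δ` gives this growth with `p = 2 + δ`.
-/

open Asymptotics Filter Topology

section Growth

variable {E : Type*} [NormedAddCommGroup E] {f : ℝ → E} {p q : ℝ}

lemma one_add_abs_rpow_isBigO_of_le (hpq : p ≤ q) :
    (fun x : ℝ ↦ (1 + |x|) ^ p) =O[⊤] fun x ↦ (1 + |x|) ^ q := by
  refine isBigO_of_le _ fun x ↦ ?_
  rw [Real.norm_of_nonneg (by positivity), Real.norm_of_nonneg (by positivity)]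
  exact Real.rpow_le_rpow_of_exponent_le (by linarith [abs_nonneg x]) hpq

lemma const_isBigO_one_add_abs_rpow (c : E) (hp : 0 ≤ p) :
    (fun _ : ℝ ↦ c) =O[⊤] fun x ↦ (1 + |x|) ^ p := by
  have hone : (fun _ : ℝ ↦ c) =O[⊤] fun x ↦ (1 + |x|) ^ (0 : ℝ) := by
    simpa only [Real.rpow_zero] using isBigO_const_const c one_ne_zero ⊤
  exact hone.trans (one_add_abs_rpow_isBigO_of_le hp)

lemma id_isBigO_one_add_abs_rpow (hp : 1 ≤ p) :
    (fun x : ℝ ↦ x) =O[⊤] fun x ↦ (1 + |x|) ^ p := by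
  have hlinear : (fun x : ℝ ↦ x) =O[⊤] fun x ↦ (1 + |x|) ^ (1 : ℝ) := by
    refine isBigO_of_le _ fun x ↦ ?_
    rw [Real.rpow_one, Real.norm_of_nonneg (by positivity : 0 ≤ 1 + |x|), Real.norm_eq_abs]
    linarith
  exact hlinear.trans (one_add_abs_rpow_isBigO_of_le hp)

lemma isBigO_one_add_abs_rpow_comp_const_add (hp : 0 ≤ p)
    (hf : f =O[⊤] fun x ↦ (1 + |x|) ^ p) (a : ℝ) :
    (fun x ↦ f (a + x)) =O[⊤] fun x ↦ (1 + |x|) ^ p := by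
  refine (hf.comp_tendsto (k := fun x ↦ a + x) tendsto_top).trans ?_
  refine isBigO_top.2 ⟨(1 + |a|) ^ p, fun x ↦ ?_⟩
  simp only [Function.comp_apply]
  rw [Real.norm_of_nonneg (by positivity), Real.norm_of_nonneg (by positivity),
    ← Real.mul_rpow (by positivity) (by positivity)]
  gcongr
  nlinarith [abs_add_le a x, mul_nonneg (abs_nonneg a) (abs_nonneg x)]

lemma isBigO_one_add_abs_rpow_of_holder {C : ℝ} (hp : 0 ≤ p)
    (hf : ∀ a b, ‖f a - f b‖ ≤ C * |a - b| ^ p) :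
    f =O[⊤] fun x ↦ (1 + |x|) ^ p := by
  have hC : 0 ≤ C := by simpa using (norm_nonneg _).trans (hf 1 0)
  have hsub : (fun x ↦ f x - f 0) =O[⊤] fun x ↦ (1 + |x|) ^ p := by
    refine isBigO_top.2 ⟨C, fun x ↦ (hf x 0).trans ?_⟩
    rw [Real.norm_of_nonneg (by positivity), sub_zero]
    gcongr
    linarith
  simpa only [sub_add_cancel] using hsub.add (const_isBigO_one_add_abs_rpow (f 0) hp)

lemma isBigO_one_add_abs_rpow_add_one_of_hasDerivAt [NormedSpace ℝ E] {f' : ℝ → E} (hp : 0 ≤ p)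
    (hf : ∀ x, HasDerivAt f (f' x) x) (hf' : f' =O[⊤] fun x ↦ (1 + |x|) ^ p) :
    f =O[⊤] fun x ↦ (1 + |x|) ^ (p + 1) := by
  obtain ⟨K, hK, hbound⟩ := hf'.exists_nonneg
  rw [isBigOWith_top] at hbound
  have hsub : (fun x ↦ f x - f 0) =O[⊤] fun x ↦ (1 + |x|) ^ (p + 1) := by
    refine isBigO_top.2 ⟨K, fun x ↦ ?_⟩
    have hderiv : ∀ y ∈ Set.Icc (-|x|) |x|, ‖f' y‖ ≤ K * (1 + |x|) ^ p := fun y hy ↦ by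
      have hyx : |y| ≤ |x| := abs_le.2 hy
      refine (hbound y).trans ?_
      rw [Real.norm_of_nonneg (by positivity)]
      gcongr
    calc ‖f x - f 0‖ ≤ K * (1 + |x|) ^ p * ‖x - 0‖ :=
          (convex_Icc (-|x|) |x|).norm_image_sub_le_of_norm_hasDerivWithin_le
            (fun y _ ↦ (hf y).hasDerivWithinAt) hderiv (by simp) (abs_le.1 le_rfl)
      _ ≤ K * (1 + |x|) ^ p * (1 + |x|) := by
          rw [sub_zero, Real.norm_eq_abs]
          gcongr
          linarith
      _ = K * ‖(1 + |x|) ^ (p + 1)‖ := by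
          rw [Real.norm_of_nonneg (by positivity), Real.rpow_add_one (by positivity), mul_assoc]
  simpa only [sub_add_cancel] using
    hsub.add (const_isBigO_one_add_abs_rpow (f 0) (by linarith : 0 ≤ p + 1))

lemma isBigO_one_add_abs_rpow_of_hasDerivAt_of_holder [NormedSpace ℝ E] {f' f'' : ℝ → E} {C : ℝ}
    (hp : 0 ≤ p) (hf : ∀ x, HasDerivAt f (f' x) x) (hf' : ∀ x, HasDerivAt f' (f'' x) x)
    (hf'' : ∀ a b, ‖f'' a - f'' b‖ ≤ C * |a - b| ^ p) :
    f =O[⊤] fun x ↦ (1 + |x|) ^ (2 + p) := by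
  have hgrowth : f' =O[⊤] fun x ↦ (1 + |x|) ^ (p + 1) :=
    isBigO_one_add_abs_rpow_add_one_of_hasDerivAt hp hf' (isBigO_one_add_abs_rpow_of_holder hp hf'')
  rw [show 2 + p = p + 1 + 1 by ring]
  exact isBigO_one_add_abs_rpow_add_one_of_hasDerivAt (by linarith) hf hgrowth

lemma isBigO_abs_pow_mul_one_add_abs_rpow {n : ℕ} (hnp : n ≤ p) (hzero : f =O[𝓝 0] fun x ↦ x ^ n)
    (htop : f =O[⊤] fun x ↦ (1 + |x|) ^ p) :
    f =O[⊤] fun x ↦ |x| ^ n * (1 + |x|) ^ (p - n) := by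
  obtain ⟨K, hK, hnear⟩ := hzero.exists_nonneg
  obtain ⟨L, hL, hfar⟩ := htop.exists_nonneg
  rw [isBigOWith_top] at hfar
  obtain ⟨r, hr, hball⟩ := Metric.eventually_nhds_iff.1 hnear.bound
  refine isBigO_top.2 ⟨max K (L * (r⁻¹ + 1) ^ n), fun x ↦ ?_⟩
  rw [Real.norm_of_nonneg (by positivity : 0 ≤ |x| ^ n * (1 + |x|) ^ (p - n))]
  rcases lt_or_ge |x| r with hx | hx
  · have hone : 1 ≤ (1 + |x|) ^ (p - n) :=
      Real.one_le_rpow (by linarith [abs_nonneg x]) (sub_nonneg.2 hnp)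
    calc ‖f x‖ ≤ K * |x| ^ n := by simpa using hball (by simpa using hx)
      _ ≤ K * (|x| ^ n * (1 + |x|) ^ (p - n)) := by
          gcongr
          exact le_mul_of_one_le_right (by positivity) hone
      _ ≤ _ := by gcongr; exact le_max_left _ _
  · have hlinear : 1 + |x| ≤ (r⁻¹ + 1) * |x| := by
      have : 1 ≤ r⁻¹ * |x| := by rwa [inv_mul_eq_div, one_le_div hr]
      linarith
    calc ‖f x‖ ≤ L * (1 + |x|) ^ p := by
          simpa only [Real.norm_of_nonneg (by positivity : 0 ≤ (1 + |x|) ^ p)] using hfar x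
      _ = L * ((1 + |x|) ^ n * (1 + |x|) ^ (p - n)) := by
          rw [← Real.rpow_natCast, ← Real.rpow_add (by positivity), add_sub_cancel]
      _ ≤ L * (((r⁻¹ + 1) * |x|) ^ n * (1 + |x|) ^ (p - n)) := by gcongr
      _ = L * (r⁻¹ + 1) ^ n * (|x| ^ n * (1 + |x|) ^ (p - n)) := by rw [mul_pow]; ring
      _ ≤ _ := by gcongr; exact le_max_right _ _

lemma exists_norm_comp_mul_le {n : ℕ} (hnp : n ≤ p) (hzero : f =O[𝓝 0] fun x ↦ x ^ n)
    (htop : f =O[⊤] fun x ↦ (1 + |x|) ^ p) :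
    ∃ K, 0 ≤ K ∧ ∀ ε k : ℝ, |ε| ≤ 1 → ‖f (ε * k)‖ ≤ K * (1 + |k|) ^ p * |ε| ^ n := by
  obtain ⟨K, hK, hbound⟩ := (isBigO_abs_pow_mul_one_add_abs_rpow hnp hzero htop).exists_nonneg
  rw [isBigOWith_top] at hbound
  refine ⟨K, hK, fun ε k hε ↦ ?_⟩
  have : 0 ≤ p - n := sub_nonneg.2 hnp
  calc ‖f (ε * k)‖ ≤ K * (|ε * k| ^ n * (1 + |ε * k|) ^ (p - n)) := by
        simpa only [Real.norm_of_nonneg (by positivity :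
          0 ≤ |ε * k| ^ n * (1 + |ε * k|) ^ (p - n))] using hbound (ε * k)
    _ ≤ K * ((|ε| * (1 + |k|)) ^ n * (1 + |k|) ^ (p - n)) := by
        rw [abs_mul]
        gcongr
        · linarith
        · exact mul_le_of_le_one_left (abs_nonneg k) hε
    _ = K * ((1 + |k|) ^ n * (1 + |k|) ^ (p - n)) * |ε| ^ n := by rw [mul_pow]; ring
    _ = K * (1 + |k|) ^ p * |ε| ^ n := by
        rw [← Real.rpow_natCast (1 + |k|), ← Real.rpow_add (by positivity), add_sub_cancel]

end Growth

lemma isLittleO_sub_linear_sub_quadratic {φ φ' : ℝ → ℝ} {x c : ℝ}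
    (hφ : ∀ᶠ y in 𝓝 x, HasDerivAt φ (φ' y) y) (hφ' : HasDerivAt φ' c x) :
    (fun h ↦ φ (x + h) - φ x - φ' x * h - c / 2 * h ^ 2) =o[𝓝 0] fun h ↦ h ^ 2 := by
  obtain ⟨r, hr, hball⟩ := Metric.eventually_nhds_iff_ball.1 hφ
  have hderiv : ∀ h ∈ Metric.ball (0 : ℝ) r,
      HasDerivWithinAt (fun h ↦ φ (x + h) - φ x - φ' x * h - c / 2 * h ^ 2)
        (φ' (x + h) - φ' x - c * h) (Metric.ball 0 r) h := fun h hh ↦ by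
    have hshift : HasDerivAt (fun h ↦ φ (x + h)) (φ' (x + h)) h :=
      (hball (x + h) (by simpa using hh)).comp_const_add x h
    have hlinear : HasDerivAt (fun h ↦ φ' x * h) (φ' x) h := by
      simpa using (hasDerivAt_id h).const_mul (φ' x)
    have hquadratic : HasDerivAt (fun h ↦ c / 2 * h ^ 2) (c * h) h :=
      ((hasDerivAt_pow 2 h).const_mul (c / 2)).congr_deriv (by norm_num; ring)
    exact (((hshift.sub_const _).sub hlinear).sub hquadratic).hasDerivWithinAt
  have hslope : (fun h ↦ φ' (x + h) - φ' x - c * h) =o[𝓝[Metric.ball 0 r] 0]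
      fun h ↦ (h - 0) ^ 1 := by
    simpa [mul_comm c] using (hasDerivAt_iff_isLittleO_nhds_zero.1 hφ').mono nhdsWithin_le_nhds
  have htaylor := (convex_ball (0 : ℝ) r).isLittleO_pow_succ_real (Metric.mem_ball_self hr)
    hderiv hslope
  simpa [nhdsWithin_eq_nhds.2 (Metric.ball_mem_nhds (0 : ℝ) hr)] using htaylor

lemma isBigO_of_isLittleO_sub_const_mul {α : Type*} {l : Filter α} {f g : α → ℝ} {κ : ℝ}
    (hfg : (fun x ↦ f x - κ * g x) =o[l] g) : f =O[l] g := by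
  simpa only [sub_add_cancel] using hfg.isBigO.add ((isBigO_refl _ _).const_mul_left κ)

lemma tendsto_comp_mul_div_pow {f k : ℝ → ℝ} {κ z : ℝ} {n : ℕ}
    (hf : (fun h ↦ f h - κ * h ^ n) =o[𝓝 0] fun h ↦ h ^ n) (hk : Tendsto k (𝓝[≠] 0) (𝓝 z)) :
    Tendsto (fun ε ↦ f (ε * k ε) / ε ^ n) (𝓝[≠] 0) (𝓝 (κ * z ^ n)) := by
  have hid : Tendsto (fun ε : ℝ ↦ ε) (𝓝[≠] 0) (𝓝 0) := nhdsWithin_le_nhds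
  have hεk : Tendsto (fun ε ↦ ε * k ε) (𝓝[≠] 0) (𝓝 0) := by simpa using hid.mul hk
  have hO : (fun ε ↦ (ε * k ε) ^ n) =O[𝓝[≠] 0] fun ε ↦ ε ^ n := by
    simpa using ((isBigO_refl (fun ε : ℝ ↦ ε) (𝓝[≠] 0)).mul (hk.isBigO_one ℝ)).pow n
  have hremainder := ((hf.comp_tendsto hεk).trans_isBigO hO).tendsto_div_nhds_zero
  have hsum := hremainder.add ((hk.pow n).const_mul κ)
  rw [zero_add] at hsum
  refine hsum.congr' ?_
  filter_upwards [self_mem_nhdsWithin] with ε (hε : ε ≠ 0)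
  simp only [Function.comp_apply]
  field_simp
  ring

lemma tendsto_sqrt_nhdsGT_zero : Tendsto Real.sqrt (𝓝[>] 0) (𝓝[≠] 0) := by
  refine tendsto_nhdsWithin_iff.2 ⟨?_, ?_⟩
  · exact (Real.continuous_sqrt.tendsto' 0 0 Real.sqrt_zero).mono_left nhdsWithin_le_nhds
  · filter_upwards [self_mem_nhdsWithin] with γ hγ using (Real.sqrt_pos.2 hγ).ne'

section Expectation

variable {Ω : Type*} [MeasurableSpace Ω] {P : Measure Ω} {Z : Ω → ℝ} {p : ℝ}

lemma integrable_one_add_abs_rpow [IsFiniteMeasure P] (hp : 0 ≤ p)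
    (hZ : MemLp Z (ENNReal.ofReal p) P) : Integrable (fun ω ↦ (1 + |Z ω|) ^ p) P := by
  have hmem : MemLp (fun ω ↦ 1 + |Z ω|) (ENNReal.ofReal p) P :=
    (memLp_const (1 : ℝ)).add hZ.norm
  have hnorm : ∀ ω, ‖1 + |Z ω|‖ = 1 + |Z ω| := fun ω ↦ Real.norm_of_nonneg (by positivity)
  simpa only [hnorm, ENNReal.toReal_ofReal hp] using hmem.integrable_norm_rpow'

section Rescaling

variable [IsFiniteMeasure P] {f : ℝ → ℝ} {n : ℕ}

lemma integrable_comp_of_isBigO (hp : 0 ≤ p) (hfm : Measurable f)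
    (htop : f =O[⊤] fun x ↦ (1 + |x|) ^ p) (hZ : MemLp Z (ENNReal.ofReal p) P) :
    Integrable (fun ω ↦ f (Z ω)) P := by
  obtain ⟨K, hbound⟩ := isBigO_top.1 htop
  refine ((integrable_one_add_abs_rpow hp hZ).const_mul K).mono'
    (hfm.comp_aemeasurable hZ.aemeasurable).aestronglyMeasurable (.of_forall fun ω ↦ ?_)
  simpa only [Real.norm_of_nonneg (by positivity : 0 ≤ (1 + |Z ω|) ^ p)] using hbound (Z ω)

lemma tendsto_integral_comp_mul_div_pow {κ : ℝ} (hnp : n ≤ p) (hfm : Measurable f)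
    (hzero : (fun h ↦ f h - κ * h ^ n) =o[𝓝 0] fun h ↦ h ^ n)
    (htop : f =O[⊤] fun x ↦ (1 + |x|) ^ p) (hZ : MemLp Z (ENNReal.ofReal p) P) (a : ℝ) :
    Tendsto (fun ε ↦ (∫ ω, f (ε * (ε * a + Z ω)) ∂P) / ε ^ n) (𝓝[≠] 0)
      (𝓝 (κ * ∫ ω, Z ω ^ n ∂P)) := by
  have hp : 0 ≤ p := n.cast_nonneg.trans hnp
  obtain ⟨K, hK, hbound⟩ :=
    exists_norm_comp_mul_le hnp (isBigO_of_isLittleO_sub_const_mul hzero) htop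
  simp_rw [← integral_div, ← integral_const_mul]
  refine tendsto_integral_filter_of_dominated_convergence
    (fun ω ↦ K * (1 + |(|a| + |Z ω|)|) ^ p) (.of_forall fun ε ↦ ?_) ?_
    ((integrable_one_add_abs_rpow hp ((memLp_const |a|).add hZ.norm)).const_mul K)
    (.of_forall fun ω ↦ tendsto_comp_mul_div_pow hzero ?_)
  · have hincrement : AEMeasurable (fun ω ↦ ε * (ε * a + Z ω)) P :=
      (hZ.aemeasurable.const_add _).const_mul _
    exact ((hfm.comp_aemeasurable hincrement).div_const _).aestronglyMeasurable
  · filter_upwards [nhdsWithin_le_nhds (Metric.closedBall_mem_nhds (0 : ℝ) one_pos),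
      self_mem_nhdsWithin] with ε hball (hε₀ : ε ≠ 0)
    have hε : |ε| ≤ 1 := by simpa using hball
    refine .of_forall fun ω ↦ ?_
    rw [norm_div, norm_pow, Real.norm_eq_abs ε, div_le_iff₀ (by positivity)]
    have hk : |ε * a + Z ω| ≤ |(|a| + |Z ω|)| := by
      rw [abs_of_nonneg (by positivity : 0 ≤ |a| + |Z ω|)]
      calc |ε * a + Z ω| ≤ |ε| * |a| + |Z ω| := abs_mul ε a ▸ abs_add_le _ _
        _ ≤ |a| + |Z ω| := by gcongr; exact mul_le_of_le_one_left (abs_nonneg a) hε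
    refine (hbound ε _ hε).trans ?_
    gcongr
  · have hcont : Continuous fun ε : ℝ ↦ ε * a + Z ω := by fun_prop
    simpa using (hcont.tendsto 0).mono_left nhdsWithin_le_nhds

end Rescaling

variable [IsProbabilityMeasure P]

lemma tendsto_integral_increment_div_sq {φ : ℝ → ℝ} {x b c : ℝ} (hp : 2 ≤ p) (hφm : Measurable φ)
    (htaylor : (fun h ↦ φ (x + h) - φ x - b * h - c / 2 * h ^ 2) =o[𝓝 0] fun h ↦ h ^ 2)
    (hgrowth : φ =O[⊤] fun x ↦ (1 + |x|) ^ p)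
    (hZ : MemLp Z (ENNReal.ofReal p) P) (hmean : ∫ ω, Z ω ∂P = 0) (a : ℝ) :
    Tendsto (fun ε ↦ (∫ ω, (φ (x + ε * (ε * a + Z ω)) - φ x) ∂P) / ε ^ 2) (𝓝[≠] 0)
      (𝓝 (a * b + c / 2 * ∫ ω, Z ω ^ 2 ∂P)) := by
  set f : ℝ → ℝ := fun h ↦ φ (x + h) - φ x - b * h with hf
  have hfm : Measurable f := by fun_prop
  have hftop : f =O[⊤] fun h ↦ (1 + |h|) ^ p :=
    ((isBigO_one_add_abs_rpow_comp_const_add (by linarith) hgrowth x).sub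
      (const_isBigO_one_add_abs_rpow (φ x) (by linarith))).sub
      ((id_isBigO_one_add_abs_rpow (by linarith)).const_mul_left b)
  have hp1 : 1 ≤ ENNReal.ofReal p := ENNReal.one_le_ofReal.2 (by linarith)
  have hsplit : ∀ ε, ∫ ω, (φ (x + ε * (ε * a + Z ω)) - φ x) ∂P =
      ∫ ω, f (ε * (ε * a + Z ω)) ∂P + b * (ε * (ε * a)) := fun ε ↦ by
    have hk : MemLp (fun ω ↦ ε * (ε * a + Z ω)) (ENNReal.ofReal p) P :=
      ((memLp_const (ε * a)).add hZ).const_mul ε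
    have hlinear : ∫ ω, b * (ε * (ε * a + Z ω)) ∂P = b * (ε * (ε * a)) := by
      rw [integral_const_mul, integral_const_mul, integral_add (integrable_const _)
        (hZ.integrable hp1), hmean]
      simp
    rw [← hlinear, ← integral_add (integrable_comp_of_isBigO (by linarith) hfm hftop hk)
      ((hk.integrable hp1).const_mul b)]
    simp only [hf, sub_add_cancel]
  have hlimit := (tendsto_integral_comp_mul_div_pow (mod_cast hp) hfm htaylor hftop hZ a).const_add
    (a * b)
  refine hlimit.congr' ?_
  filter_upwards [self_mem_nhdsWithin] with ε (hε : ε ≠ 0)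
  rw [hsplit]
  field_simp
  ring

theorem continuous_trading_limit_general {l w ws c : ℝ} {Y : Ω → ℝ} {φ φ' : ℝ → ℝ}
    (hp : 2 ≤ p) (hl : 0 ≤ l) (hmY : AEStronglyMeasurable Y P)
    (hmom : Integrable (fun ω ↦ |Y ω| ^ p) P)
    (hEY : ∫ ω, Y ω ∂P = 0) (hVY : ∫ ω, Y ω ^ 2 ∂P = 1)
    (hφm : Measurable φ) (hgrowth : φ =O[⊤] fun x ↦ (1 + |x|) ^ p)
    (hd1 : ∀ᶠ x in 𝓝 w, HasDerivAt φ (φ' x) x) (hd2 : HasDerivAt φ' c w) :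
    Tendsto
      (fun γ : ℝ ↦ (1 / γ) * ∫ ω, (φ (w + γ * (ws - w) + Real.sqrt (l * γ) * Y ω * w) - φ w) ∂P)
      (𝓝[>] 0) (𝓝 ((ws - w) * φ' w + (l / 2) * w ^ 2 * c)) := by
  have hY : MemLp Y (ENNReal.ofReal p) P := by
    rw [← integrable_norm_rpow_iff hmY (by simpa using by linarith) ENNReal.ofReal_ne_top,
      ENNReal.toReal_ofReal (by linarith)]
    exact hmom
  have hmean : ∫ ω, √l * w * Y ω ∂P = 0 := by rw [integral_const_mul, hEY, mul_zero]
  have hvar : ∫ ω, (√l * w * Y ω) ^ 2 ∂P = l * w ^ 2 := by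
    simp_rw [mul_pow, integral_const_mul, hVY, Real.sq_sqrt hl, mul_one]
  have hlimit := (tendsto_integral_increment_div_sq hp hφm
    (isLittleO_sub_linear_sub_quadratic hd1 hd2) hgrowth (hY.const_mul (√l * w)) hmean
    (ws - w)).comp tendsto_sqrt_nhdsGT_zero
  rw [hvar, show c / 2 * (l * w ^ 2) = l / 2 * w ^ 2 * c by ring] at hlimit
  refine hlimit.congr' ?_
  filter_upwards [self_mem_nhdsWithin] with γ (hγ : 0 < γ)
  have hincrement : ∀ ω, w + √γ * (√γ * (ws - w) + √l * w * Y ω) =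
      w + γ * (ws - w) + √(l * γ) * Y ω * w := fun ω ↦ by
    rw [Real.sqrt_mul hl]
    linear_combination (ws - w) * Real.sq_sqrt hγ.le
  simp only [Function.comp_apply, hincrement, Real.sq_sqrt hγ.le, div_eq_inv_mul, mul_one]

end Expectation

/-- Pointwise continuous trading limit: with `w'_γ = w + γ(w₊-w) + √(λγ) Y w`,
`lim_{γ→0⁺} (1/γ) E[φ(w'_γ) - φ(w)] = (w₊-w)φ'(w) + (λ/2)w²φ''(w)`,
producing the drift and diffusion terms of the Fokker-Planck equation. -/
theorem continuous_trading_limit {Ω : Type*} [MeasurableSpace Ω]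
    (P : Measure Ω) [IsProbabilityMeasure P]
    (δ l w ws : ℝ) (hδ : δ ∈ Set.Ioc (0:ℝ) 1) (hl : 0 < l)
    (hw : 0 ≤ w) (hws : 0 ≤ ws)
    (Y : Ω → ℝ) (hmY : Measurable Y)
    (hY1 : Integrable Y P) (hY2 : Integrable (fun ω => Y ω ^ 2) P)
    (hmom : Integrable (fun ω => |Y ω| ^ (2 + δ)) P)
    (hEY : ∫ ω, Y ω ∂P = 0) (hVY : ∫ ω, Y ω ^ 2 ∂P = 1)
    (φ φ' φ'' : ℝ → ℝ)
    (hd1 : ∀ x, HasDerivAt φ (φ' x) x) (hd2 : ∀ x, HasDerivAt φ' (φ'' x) x)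
    (C : ℝ) (hC : ∀ a b, |φ'' a - φ'' b| ≤ C * |a - b| ^ δ) :
    Filter.Tendsto
      (fun γ : ℝ =>
        (1 / γ) * ∫ ω, (φ (w + γ * (ws - w) + Real.sqrt (l * γ) * Y ω * w) - φ w) ∂P)
      (nhdsWithin 0 (Set.Ioi 0))
      (nhds ((ws - w) * φ' w + (l / 2) * w ^ 2 * φ'' w)) := by
  have hφ : Continuous φ := continuous_iff_continuousAt.2 fun x ↦ (hd1 x).continuousAt
  exact continuous_trading_limit_general (by linarith [hδ.1]) hl.le hmY.aestronglyMeasurable hmom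
    hEY hVY hφ.measurable (isBigO_one_add_abs_rpow_of_hasDerivAt_of_holder hδ.1.le hd1 hd2 hC)
    (.of_forall hd1) (hd2 w)
end

section
/- Let λ > 0 and set μ = 1 + 2/λ. The function g_∞(w) = ((μ-1)^μ/Γ(μ)) · exp(-(μ-1)/w) / w^{1+μ}, defined for w > 0, satisfies the zero-flux identity (λ/2) · d/dw ( w² g_∞(w) ) + (w - 1) g_∞(w) = 0 for every w > 0; consequently g_∞ is a stationary solution of the Fokker-Planck equation ∂g/∂τ = (λ/2) ∂²(w² g)/∂w² + ∂((w - 1) g)/∂w. -/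
/-!
With `f w = exp (-b / w) / w ^ (1 + a)`, the product `w² f` is `exp (-b / w) * w ^ (1 - a)`, whose
logarithmic derivative is `(b - (a - 1) w) / w²`. Hence `(w² f)' = (b - (a - 1) w) f`: the drift
is affine, and the flux `D (w² f)' + (w - m) f` vanishes as soon as `D (a - 1) = 1` and `D b = m`.
The flux is linear, so normalizing `f` does not matter; a vanishing flux has zero derivative.
-/

open Set

/-- The inverse-Gamma density of shape `a` and scale `b`, without its normalizing constant
`b ^ a / Γ(a)`. It is meant for `0 < w`; nothing is cut off at `w ≤ 0`. -/
noncomputable def invGammaKernel (a b w : ℝ) : ℝ :=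
  Real.exp (-b / w) / w ^ (1 + a)

/-- The flux `D (w² g)' + (w - m) g` of the Fokker-Planck equation
`∂g/∂τ = ∂/∂w (D ∂(w² g)/∂w + (w - m) g)` for a wealth distribution `g` of mean `m`. -/
noncomputable def wealthFlux (D m : ℝ) (g : ℝ → ℝ) (w : ℝ) : ℝ :=
  D * deriv (fun v => v ^ 2 * g v) w + (w - m) * g w

theorem wealthFlux_const_mul (D m c : ℝ) (g : ℝ → ℝ) (w : ℝ) :
    wealthFlux D m (fun v => c * g v) w = c * wealthFlux D m g w := by
  simp only [wealthFlux, mul_left_comm _ c, deriv_const_mul_field, mul_add]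

theorem wealthFlux_eqOn {g h : ℝ → ℝ} {s : Set ℝ} (D m : ℝ) (hs : IsOpen s) (hgh : EqOn g h s) :
    EqOn (wealthFlux D m g) (wealthFlux D m h) s := by
  intro w hw
  have hsq : EqOn (fun v => v ^ 2 * g v) (fun v => v ^ 2 * h v) s := fun v hv => by
    simp only [hgh hv]
  simp only [wealthFlux, hsq.deriv hs hw, hgh hw]

theorem hasDerivAt_exp_neg_div_mul_rpow (b p : ℝ) {w : ℝ} (hw : w ≠ 0) :
    HasDerivAt (fun v => Real.exp (-b / v) * v ^ p)
      ((b + p * w) / w ^ 2 * (Real.exp (-b / w) * w ^ p)) w := by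
  have hexp := ((hasDerivAt_const w (-b)).fun_div (hasDerivAt_id' w) hw).exp
  have hpow := Real.hasDerivAt_rpow_const (p := p) (Or.inl hw)
  rw [Real.rpow_sub_one hw] at hpow
  refine (hexp.fun_mul hpow).congr_deriv ?_
  field_simp
  ring

theorem sq_mul_invGammaKernel (a b : ℝ) {w : ℝ} (hw : 0 < w) :
    w ^ 2 * invGammaKernel a b w = Real.exp (-b / w) * w ^ (1 - a) := by
  have hpow : w ^ (1 - a) = w ^ 2 / w ^ (1 + a) := by
    rw [← Real.rpow_two, ← Real.rpow_sub hw]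
    ring_nf
  rw [invGammaKernel, hpow]
  ring

theorem hasDerivAt_sq_mul_invGammaKernel (a b : ℝ) {w : ℝ} (hw : 0 < w) :
    HasDerivAt (fun v => v ^ 2 * invGammaKernel a b v)
      ((b - (a - 1) * w) * invGammaKernel a b w) w := by
  have heq : (fun v => v ^ 2 * invGammaKernel a b v) =ᶠ[nhds w]
      fun v => Real.exp (-b / v) * v ^ (1 - a) := by
    filter_upwards [Ioi_mem_nhds hw] with v hv
    exact sq_mul_invGammaKernel a b hv
  have hprod := hasDerivAt_exp_neg_div_mul_rpow b (1 - a) hw.ne'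
  refine (hprod.congr_of_eventuallyEq heq).congr_deriv ?_
  rw [← sq_mul_invGammaKernel a b hw]
  field_simp
  ring

theorem wealthFlux_invGammaKernel {D m a b w : ℝ} (ha : D * (a - 1) = 1) (hb : D * b = m)
    (hw : 0 < w) : wealthFlux D m (invGammaKernel a b) w = 0 := by
  rw [wealthFlux, (hasDerivAt_sq_mul_invGammaKernel a b hw).deriv]
  linear_combination (hb - w * ha) * invGammaKernel a b w

/-- The inverse-Gamma density `g_∞(w) = ((μ-1)^μ/Γ(μ)) e^{-(μ-1)/w} w^{-(1+μ)}`
with `μ = 1 + 2/λ` satisfies the zero-flux identity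
`(λ/2) d/dw(w² g_∞(w)) + (w - 1) g_∞(w) = 0` for every `w > 0`; consequently it is
a stationary solution of the Fokker-Planck equation
`∂g/∂τ = (λ/2)∂²(w²g)/∂w² + ∂((w-1)g)/∂w`. -/
theorem inverse_gamma_zero_flux (l μ : ℝ) (hl : 0 < l) (hμ : μ = 1 + 2 / l)
    (g : ℝ → ℝ)
    (hg : ∀ w : ℝ, 0 < w →
      g w = (μ - 1) ^ μ / Real.Gamma μ * Real.exp (-(μ - 1) / w) / w ^ (1 + μ)) :
    (∀ w : ℝ, 0 < w →
      l / 2 * deriv (fun v : ℝ => v ^ 2 * g v) w + (w - 1) * g w = 0) ∧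
    (∀ w : ℝ, 0 < w →
      deriv (fun v : ℝ =>
        l / 2 * deriv (fun u : ℝ => u ^ 2 * g u) v + (v - 1) * g v) w = 0) := by
  have hD : l / 2 * (μ - 1) = 1 := by
    rw [hμ]
    field_simp
    ring
  have hg_kernel : EqOn g
      (fun w => (μ - 1) ^ μ / Real.Gamma μ * invGammaKernel μ (μ - 1) w) (Ioi 0) :=
    fun w hw => (hg w hw).trans (mul_div_assoc _ _ _)
  have hflux : EqOn (wealthFlux (l / 2) 1 g) (fun _ => 0) (Ioi 0) := fun w hw => by
    rw [wealthFlux_eqOn _ _ isOpen_Ioi hg_kernel hw, wealthFlux_const_mul,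
      wealthFlux_invGammaKernel hD hD hw, mul_zero]
  exact ⟨hflux, fun w hw => (hflux.deriv isOpen_Ioi hw).trans (deriv_const w 0)⟩
end

section
/- For every μ > 1, the complementary cumulative distribution of the stationary density satisfies the weak Pareto law with exponent μ: lim_{w → ∞} w^μ ∫_w^∞ g_∞(s) ds = (μ-1)^μ/(μ Γ(μ)). That is, the fraction of agents with wealth exceeding w decays like w^{-μ} for large w. -/
/-!
A function `f` with `s ^ (1 + μ) • f s → c` differs from `s ^ (-(1 + μ)) • c` by
`o(s ^ (-(1 + μ)))`. Integration over `(w, ∞)` preserves such an estimate, and the integral of the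
leading term is `w ^ (-μ) • μ⁻¹ • c`. For the inverse-Gamma density, `exp (-(μ - 1) / s) → 1` makes
`c` the normalising constant `(μ - 1) ^ μ / Γ(μ)`.
-/

open Asymptotics Filter MeasureTheory Set Topology

section SmallSets

variable {α E F : Type*} [MeasurableSpace α] [NormedAddCommGroup E] [NormedAddCommGroup F]
  {ν : Measure α} {l : Filter α} {f : α → E} {g : α → F}

theorem isLittleO_setIntegral_smallSets [NormedSpace ℝ E] [IsMeasurablyGenerated l]
    (hfg : f =o[l] g) (hg : IntegrableAtFilter g l ν) :
    (fun s ↦ ∫ x in s, f x ∂ν) =o[l.smallSets] fun s ↦ ∫ x in s, ‖g x‖ ∂ν := by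
  refine IsLittleO.of_bound fun ε hε ↦ ?_
  obtain ⟨t, ht, ht_meas, hbound⟩ := (hfg.def hε).exists_measurable_mem
  filter_upwards [eventually_smallSets.2 ⟨t, ht, fun _ hs ↦ hs⟩, hg.eventually] with s hst hgs
  have hbound_ae : ∀ᵐ x ∂ν.restrict s, ‖f x‖ ≤ ε * ‖g x‖ :=
    ae_restrict_of_ae_restrict_of_subset hst (ae_restrict_of_forall_mem ht_meas hbound)
  calc
    ‖∫ x in s, f x ∂ν‖ ≤ ∫ x in s, ε * ‖g x‖ ∂ν :=
      norm_integral_le_of_norm_le (hgs.norm.const_mul ε) hbound_ae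
    _ = ε * ∫ x in s, ‖g x‖ ∂ν := integral_const_mul ε _
    _ ≤ ε * ‖∫ x in s, ‖g x‖ ∂ν‖ := by gcongr; exact Real.le_norm_self _

theorem isLittleO_setIntegral_sub_setIntegral_smul_smallSets [NormedSpace ℝ E] [CompleteSpace E]
    [IsMeasurablyGenerated l] {p : α → ℝ} {c : E} (hf : StronglyMeasurableAtFilter f l ν)
    (hp : IntegrableAtFilter p l ν) (hfp : (fun x ↦ f x - p x • c) =o[l] p) :
    (fun s ↦ (∫ x in s, f x ∂ν) - (∫ x in s, p x ∂ν) • c)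
      =o[l.smallSets] fun s ↦ ∫ x in s, ‖p x‖ ∂ν := by
  have hpc : (fun x ↦ p x • c) =O[l] p :=
    .of_bound ‖c‖ (.of_forall fun x ↦ by rw [norm_smul, mul_comm])
  have hf_int : IntegrableAtFilter f l ν := by
    refine IsBigO.integrableAtFilter ?_ hf hp
    simpa only [sub_add_cancel] using hfp.isBigO.add hpc
  refine (isLittleO_setIntegral_smallSets hfp hp).congr' ?_ .rfl
  filter_upwards [hf_int.eventually, hp.eventually] with s hfs hps
  rw [integral_sub hfs (hps.smul_const c), integral_smul_const]

end SmallSets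

theorem tendsto_Ioi_atTop_smallSets {α : Type*} [Preorder α] :
    Tendsto (Ioi : α → Set α) atTop atTop.smallSets := by
  refine tendsto_smallSets_iff.2 fun t ht ↦ ?_
  filter_upwards [eventually_forall_ge_atTop.2 ht] with w hw s hs using hw s (le_of_lt hs)

section PowerTail

variable {μ : ℝ}

theorem integrableAtFilter_rpow_neg_one_add_atTop (hμ : 0 < μ) :
    IntegrableAtFilter (fun s : ℝ ↦ s ^ (-(1 + μ))) atTop :=
  ⟨Ioi 1, Ioi_mem_atTop 1, integrableOn_Ioi_rpow_of_lt (by linarith) one_pos⟩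

theorem rpow_mul_setIntegral_Ioi_rpow_neg_one_add (hμ : 0 < μ) {w : ℝ} (hw : 0 < w) :
    w ^ μ * ∫ s in Ioi w, s ^ (-(1 + μ)) = μ⁻¹ := by
  have hwμ : w ^ μ ≠ 0 := (Real.rpow_pos_of_pos hw μ).ne'
  rw [integral_Ioi_rpow_of_lt (by linarith) hw, show -(1 + μ) + 1 = -μ by ring,
    Real.rpow_neg hw.le, neg_div_neg_eq, mul_div_assoc', mul_inv_cancel₀ hwμ, one_div]

variable {E : Type*} [NormedAddCommGroup E] [NormedSpace ℝ E] {f : ℝ → E} {c : E}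

theorem isLittleO_sub_rpow_neg_smul {a : ℝ} (hf : Tendsto (fun s ↦ s ^ a • f s) atTop (𝓝 c)) :
    (fun s ↦ f s - s ^ (-a) • c) =o[atTop] fun s ↦ s ^ (-a) := by
  have h_sub : (fun s ↦ s ^ a • f s - c) =o[atTop] fun _ ↦ (1 : ℝ) :=
    (isLittleO_one_iff ℝ).2 (tendsto_sub_nhds_zero_iff.2 hf)
  refine ((isBigO_refl (fun s : ℝ ↦ s ^ (-a)) atTop).smul_isLittleO h_sub).congr' ?_ ?_
  · filter_upwards [eventually_gt_atTop 0] with s hs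
    rw [smul_sub, smul_smul, ← Real.rpow_add hs, neg_add_cancel, Real.rpow_zero, one_smul]
  · exact .of_forall fun s ↦ mul_one _

theorem tendsto_rpow_smul_setIntegral_Ioi [CompleteSpace E] (hμ : 0 < μ)
    (hf_meas : StronglyMeasurableAtFilter f atTop)
    (hf : Tendsto (fun s ↦ s ^ (1 + μ) • f s) atTop (𝓝 c)) :
    Tendsto (fun w ↦ w ^ μ • ∫ s in Ioi w, f s) atTop (𝓝 (μ⁻¹ • c)) := by
  have h_tail := (isLittleO_setIntegral_sub_setIntegral_smul_smallSets hf_meas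
    (integrableAtFilter_rpow_neg_one_add_atTop hμ)
    (isLittleO_sub_rpow_neg_smul hf)).comp_tendsto tendsto_Ioi_atTop_smallSets
  have h_diff : (fun w ↦ w ^ μ • (∫ s in Ioi w, f s) - μ⁻¹ • c) =o[atTop] fun _ ↦ μ⁻¹ := by
    refine ((isBigO_refl (fun w : ℝ ↦ w ^ μ) atTop).smul_isLittleO h_tail).congr' ?_ ?_
    · filter_upwards [eventually_gt_atTop 0] with w hw
      simp only [Function.comp_apply]
      rw [smul_sub, smul_smul, rpow_mul_setIntegral_Ioi_rpow_neg_one_add hμ hw]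
    · filter_upwards [eventually_gt_atTop 0] with w hw
      have h_norm : ∫ s in Ioi w, ‖s ^ (-(1 + μ))‖ = ∫ s in Ioi w, s ^ (-(1 + μ)) :=
        setIntegral_congr_fun measurableSet_Ioi fun s hs ↦
          Real.norm_of_nonneg (Real.rpow_nonneg (hw.trans hs).le _)
      rw [Function.comp_apply, h_norm, smul_eq_mul,
        rpow_mul_setIntegral_Ioi_rpow_neg_one_add hμ hw]
  exact tendsto_sub_nhds_zero_iff.1 ((isLittleO_const_iff (inv_ne_zero hμ.ne')).1 h_diff)

end PowerTail

theorem inverse_gamma_weak_pareto_law_general {μ : ℝ} (hμ : 0 < μ) (β C : ℝ) :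
    Tendsto (fun w : ℝ ↦ w ^ μ * ∫ s in Ioi w, C * Real.exp (-β / s) / s ^ (1 + μ))
      atTop (𝓝 (C / μ)) := by
  have h_meas : Measurable fun s : ℝ ↦ C * Real.exp (-β / s) / s ^ (1 + μ) := by fun_prop
  have h_exp : Tendsto (fun s : ℝ ↦ C * Real.exp (-β / s)) atTop (𝓝 C) := by
    have h_div : Tendsto (fun s : ℝ ↦ -β / s) atTop (𝓝 0) := tendsto_id.const_div_atTop _
    simpa only [Real.exp_zero, mul_one] using h_div.rexp.const_mul C
  rw [div_eq_inv_mul]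
  refine tendsto_rpow_smul_setIntegral_Ioi hμ
    h_meas.aestronglyMeasurable.stronglyMeasurableAtFilter (h_exp.congr' ?_)
  filter_upwards [eventually_gt_atTop 0] with s hs
  exact (mul_div_cancel₀ _ (Real.rpow_pos_of_pos hs _).ne').symm

/-- Weak Pareto law for the stationary distribution: for every `μ > 1`,
`lim_{w→∞} w^μ ∫_w^∞ g_∞(s) ds = (μ-1)^μ/(μ Γ(μ))`; the fraction of agents with
wealth exceeding `w` decays like `w^{-μ}`. -/
theorem inverse_gamma_weak_pareto_law (μ : ℝ) (hμ : 1 < μ) :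
    Filter.Tendsto
      (fun w : ℝ =>
        w ^ μ * ∫ s in Set.Ioi w,
          (μ - 1) ^ μ / Real.Gamma μ * Real.exp (-(μ - 1) / s) / s ^ (1 + μ))
      Filter.atTop (nhds ((μ - 1) ^ μ / (μ * Real.Gamma μ))) := by
  rw [mul_comm μ, ← div_div]
  exact inverse_gamma_weak_pareto_law_general (zero_lt_one.trans hμ) (μ - 1) _
end
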